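/- Let G be a cubic graph containing a contractible triangle T, and let H = G/T be the cubic graph obtained by contracting T to a single vertex v_T. Suppose g: E(H) → E(S) is a map with v_T ∈ V(g), and s ∈ V(S) satisfies g(∂_H(v_T)) = ∂_S(s). Then g extends to a map f: E(G) → E(S) (agreeing with g on E(G)∩E(H), i.e., on edges not in T) with V(f) ⊇ (V(g)\{v_T}) ∪ V(T), by coloring each edge of T with the color from ∂_S(s) not appearing on the two edges incident to its endpoints. -/

import Mathlib

open scoped Classical

/-- A finite undirected multigraph (possibly with loops and parallel edges),
given by a vertex type, an edge type, and an endpoints map. -/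
structure Multigraph where
  V : Type
  E : Type
  [fintV : Fintype V]
  [fintE : Fintype E]
  [decV : DecidableEq V]
  [decE : DecidableEq E]
  ends : E → Sym2 V

namespace Multigraph

attribute [instance] Multigraph.fintV Multigraph.fintE Multigraph.decV Multigraph.decE

variable (G : Multigraph)

/-- The number of times `v` occurs as an endpoint of `e` (2 for a loop at `v`). -/
def incCount (v : G.V) (e : G.E) : ℕ :=
  if G.ends e = Sym2.diag v then 2 else if v ∈ G.ends e then 1 else 0

/-- Degree of a vertex (a loop contributes 2). -/
def degree (v : G.V) : ℕ := ∑ e : G.E, G.incCount v e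

/-- The set `∂_G(v)` of edges incident to `v`. -/
def star (v : G.V) : Finset G.E := Finset.univ.filter fun e => v ∈ G.ends e

/-- No loops. -/
def Loopless : Prop := ∀ e : G.E, ¬ (G.ends e).IsDiag

/-- A cubic graph: loopless and 3-regular (parallel edges allowed). -/
def Cubic : Prop := G.Loopless ∧ ∀ v : G.V, G.degree v = 3

/-- A cubic pseudo-graph: 3-regular, loops and parallel edges allowed. -/
def CubicPseudo : Prop := ∀ v : G.V, G.degree v = 3

/-- A simple graph: no loops and no parallel edges. -/
def Simple : Prop := G.Loopless ∧ ∀ e e' : G.E, G.ends e = G.ends e' → e = e'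

/-- Two edges are adjacent if they are distinct and share an endpoint. -/
def EdgeAdj (e e' : G.E) : Prop :=
  e ≠ e' ∧ ∃ v : G.V, v ∈ G.ends e ∧ v ∈ G.ends e'

/-- A matching: a set of pairwise non-adjacent edges. -/
def IsMatching (M : Set G.E) : Prop :=
  ∀ e ∈ M, ∀ e' ∈ M, e ≠ e' → ¬ ∃ v : G.V, v ∈ G.ends e ∧ v ∈ G.ends e'

/-- A perfect matching: a matching covering every vertex. -/
def IsPerfectMatching (M : Set G.E) : Prop :=
  G.IsMatching M ∧ ∀ v : G.V, ∃ e ∈ M, v ∈ G.ends e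

/-- Degree of `v` within the spanning subgraph with edge set `A`. -/
noncomputable def degIn (A : Set G.E) (v : G.V) : ℕ :=
  ∑ e : G.E, if e ∈ A then G.incCount v e else 0

/-- `A` is the edge set of a `k`-factor: a spanning `k`-regular subgraph. -/
def IsKFactor (k : ℕ) (A : Set G.E) : Prop := ∀ v : G.V, G.degIn A v = k

/-- `A` is the edge set of an even subgraph. -/
def EvenSubgraph (A : Set G.E) : Prop := ∀ v : G.V, Even (G.degIn A v)

/-- Reachability using only edges from `A`. -/
def Reach (A : Set G.E) : G.V → G.V → Prop :=
  Relation.ReflTransGen fun a b => ∃ e ∈ A, G.ends e = s(a, b)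

/-- Connectedness. -/
def Connected : Prop := ∀ u v : G.V, G.Reach Set.univ u v

/-- A bridge: an edge whose removal disconnects its endpoints. -/
def IsBridge (e : G.E) : Prop :=
  ∀ u w : G.V, G.ends e = s(u, w) → ¬ G.Reach {e' | e' ≠ e} u w

/-- The chromatic index: least number of colors of a proper edge coloring. -/
noncomputable def chromaticIndex : ℕ :=
  sInf {n | ∃ c : G.E → Fin n, ∀ e e', G.EdgeAdj e e' → c e ≠ c e'}

/-- A triangle on distinct vertices `u, v, w` with edges `e₁, e₂, e₃`. -/
def IsTriangle (e₁ e₂ e₃ : G.E) (u v w : G.V) : Prop :=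
  u ≠ v ∧ v ≠ w ∧ u ≠ w ∧
    G.ends e₁ = s(u, v) ∧ G.ends e₂ = s(v, w) ∧ G.ends e₃ = s(u, w)

/-- Triangle-freeness. -/
def TriangleFree : Prop :=
  ¬ ∃ (e₁ e₂ e₃ : G.E) (u v w : G.V), G.IsTriangle e₁ e₂ e₃ u v w

/-- An isomorphism of multigraphs. -/
structure Iso (G H : Multigraph) where
  vEquiv : G.V ≃ H.V
  eEquiv : G.E ≃ H.E
  ends_map : ∀ e : G.E, H.ends (eEquiv e) = (G.ends e).map vEquiv

/-- `G` and `H` are isomorphic. -/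
def IsIsomorphicTo (G H : Multigraph) : Prop := Nonempty (Iso G H)

/-- An `H`-coloring of `G`: `f(∂_G(x)) = ∂_H(y)` for every vertex `x` of `G`,
some vertex `y` of `H`. -/
def IsHColoring (G H : Multigraph) (f : G.E → H.E) : Prop :=
  ∀ x : G.V, ∃ y : H.V, (G.star x).image f = H.star y

/-- The set `V(f)` of vertices of `G` satisfying the `H`-coloring condition under `f`. -/
def colVerts (G H : Multigraph) (f : G.E → H.E) : Set G.V :=
  {x : G.V | ∃ y : H.V, (G.star x).image f = H.star y}

/-- The incidence multiset of a vertex: each incident edge with its multiplicity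
(a loop occurs twice). -/
noncomputable def incMultiset (v : G.V) : Multiset G.E :=
  ∑ e : G.E, (G.incCount v e) • ({e} : Multiset G.E)

end Multigraph

/-- The Petersen graph. -/
def Petersen : Multigraph where
  V := Fin 10
  E := {p : Sym2 (Fin 10) //
    p ∈ ({s(0,1), s(1,2), s(2,3), s(3,4), s(4,0),
          s(0,5), s(1,6), s(2,7), s(3,8), s(4,9),
          s(5,7), s(7,9), s(9,6), s(6,8), s(8,5)} : Finset (Sym2 (Fin 10)))}
  ends := Subtype.val

/-- The Sylvester graph `S` on 10 vertices: a central vertex 0 joined by three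
bridges to three end-blocks; each end-block is a 3-vertex multigraph whose two
non-root vertices are joined by a pair of parallel edges. -/
def SylvesterS : Multigraph where
  V := Fin 10
  E := Fin 15
  ends := ![s(0,1), s(1,2), s(1,3), s(2,3), s(2,3),
            s(0,4), s(4,5), s(4,6), s(5,6), s(5,6),
            s(0,7), s(7,8), s(7,9), s(8,9), s(8,9)]

/-- The Sylvester simple graph `S₁₆` on 16 vertices: central vertex 0 joined by
bridges to three 5-vertex end-blocks with edges
(v1,v2),(v1,v3),(v1,v4),(v2,v3),(v2,v4),(v3,v5),(v4,v5). -/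
def Sylvester16 : Multigraph where
  V := Fin 16
  E := {p : Sym2 (Fin 16) //
    p ∈ ({s(1,2), s(1,3), s(1,4), s(2,3), s(2,4), s(3,5), s(4,5), s(0,5),
          s(6,7), s(6,8), s(6,9), s(7,8), s(7,9), s(8,10), s(9,10), s(0,10),
          s(11,12), s(11,13), s(11,14), s(12,13), s(12,14), s(13,15), s(14,15),
          s(0,15)} : Finset (Sym2 (Fin 16)))}
  ends := Subtype.val

/-- The graph `S'` on 10 vertices: two 5-vertex blocks, each consisting of a
triangle v1v2v3 together with edges (v1,v4),(v2,v4),(v3,v5),(v4,v5), joined by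
a bridge between the two degree-2 vertices. -/
def Sprime : Multigraph where
  V := Fin 10
  E := {p : Sym2 (Fin 10) //
    p ∈ ({s(0,1), s(0,2), s(1,2), s(0,3), s(1,3), s(2,4), s(3,4),
          s(5,6), s(5,7), s(6,7), s(5,8), s(6,8), s(7,9), s(8,9),
          s(4,9)} : Finset (Sym2 (Fin 10)))}
  ends := Subtype.val

/-- The Sylvester pseudo-graph `S₄` on 4 vertices: a central vertex 0 joined to
vertices 1, 2, 3 (edges `a = 0`, `b = 1`, `c = 2`), each of which carries a loop
(`a' = 3`, `b' = 4`, `c' = 5`). -/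
def S4 : Multigraph where
  V := Fin 4
  E := Fin 6
  ends := ![s(0,1), s(0,2), s(0,3), s(1,1), s(2,2), s(3,3)]


/-- The multigraph obtained from `G` by contracting the triangle on vertices
`u, v, w` (with edges `t₁, t₂, t₃`) onto the vertex `u`. -/
def Multigraph.contractTriangle (G : Multigraph) (u v w : G.V) (t₁ t₂ t₃ : G.E)
    (huv : u ≠ v) (huw : u ≠ w) : Multigraph where
  V := {x : G.V // x ≠ v ∧ x ≠ w}
  E := {e : G.E // e ≠ t₁ ∧ e ≠ t₂ ∧ e ≠ t₃}
  ends := fun e => (G.ends e.val).map fun x =>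
    if h : x = v ∨ x = w then ⟨u, huv, huw⟩ else ⟨x, by tauto⟩

theorem Multigraph.mem_star (G : Multigraph) (x : G.V) (e : G.E) :
    e ∈ G.star x ↔ x ∈ G.ends e := by
  simp [Multigraph.star]

theorem Multigraph.Loopless.degree_eq_card_star {G : Multigraph} (hG : G.Loopless) (x : G.V) :
    G.degree x = (G.star x).card := by
  rw [Multigraph.degree, Multigraph.star, Finset.card_filter]
  refine Finset.sum_congr rfl fun e _ => ?_
  have h : G.ends e ≠ Sym2.diag x := fun h => hG e (h ▸ Sym2.diag_isDiag x)
  simp [Multigraph.incCount, h]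

/-- In a cubic graph, two distinct edges at a vertex leave exactly one further edge. -/
theorem Multigraph.Cubic.exists_third_edge {G : Multigraph} (hG : G.Cubic) {x : G.V} {t t' : G.E}
    (htt' : t ≠ t') (ht : x ∈ G.ends t) (ht' : x ∈ G.ends t') :
    ∃ a, a ≠ t ∧ a ≠ t' ∧ ∀ e, x ∈ G.ends e ↔ e = t ∨ e = t' ∨ e = a := by
  have hcard : (((G.star x).erase t).erase t').card = 1 := by
    rw [Finset.card_erase_of_mem, Finset.card_erase_of_mem, ← hG.1.degree_eq_card_star, hG.2]
    · exact (G.mem_star x t).2 ht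
    · exact Finset.mem_erase.2 ⟨htt'.symm, (G.mem_star x t').2 ht'⟩
  obtain ⟨a, ha⟩ := Finset.card_eq_one.1 hcard
  have hmem (e : G.E) : (e ≠ t' ∧ e ≠ t ∧ x ∈ G.ends e) ↔ e = a := by
    rw [← Finset.mem_singleton, ← ha, Finset.mem_erase, Finset.mem_erase, G.mem_star]
  have h := (hmem a).2 rfl
  refine ⟨a, h.2.1, h.1, fun e => ?_⟩
  have := hmem e
  constructor
  · tauto
  · rintro (rfl | rfl | rfl)
    exacts [ht, ht', h.2.2]

theorem Multigraph.contractTriangle_root_mem_ends (G : Multigraph) (u v w : G.V) (t₁ t₂ t₃ : G.E)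
    (huv : u ≠ v) (huw : u ≠ w) (e : (G.contractTriangle u v w t₁ t₂ t₃ huv huw).E) :
    (⟨u, huv, huw⟩ : (G.contractTriangle u v w t₁ t₂ t₃ huv huw).V) ∈
        (G.contractTriangle u v w t₁ t₂ t₃ huv huw).ends e ↔
      u ∈ G.ends e.val ∨ v ∈ G.ends e.val ∨ w ∈ G.ends e.val := by
  refine Sym2.mem_map.trans ?_
  constructor
  · rintro ⟨y, hy, hyu⟩
    split_ifs at hyu with h
    · rcases h with rfl | rfl <;> tauto
    · obtain rfl : y = u := congrArg Subtype.val hyu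
      exact Or.inl hy
  · rintro (h | h | h)
    exacts [⟨u, h, by simp [huv, huw]⟩, ⟨v, h, by simp⟩, ⟨w, h, by simp⟩]

theorem Multigraph.contractTriangle_mem_ends (G : Multigraph) (u v w : G.V) (t₁ t₂ t₃ : G.E)
    (huv : u ≠ v) (huw : u ≠ w) (x : (G.contractTriangle u v w t₁ t₂ t₃ huv huw).V)
    (hx : x.val ≠ u) (e : (G.contractTriangle u v w t₁ t₂ t₃ huv huw).E) :
    x ∈ (G.contractTriangle u v w t₁ t₂ t₃ huv huw).ends e ↔ x.val ∈ G.ends e.val := by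
  obtain ⟨x, hxv, hxw⟩ := x
  refine Sym2.mem_map.trans ?_
  constructor
  · rintro ⟨y, hy, hyx⟩
    split_ifs at hyx with h
    · exact absurd (congrArg Subtype.val hyx).symm hx
    · obtain rfl : y = x := congrArg Subtype.val hyx
      exact hy
  · exact fun h => ⟨x, h, dif_neg (by simp [hxv, hxw])⟩

/-- extending a map g on G/T with v_T ∈ V(g) over a contractible
triangle T, by coloring the edges of T with colors from ∂_S(s). -/
theorem extend_over_contractible_triangle (G : Multigraph) (hG : G.Cubic)
    (u v w : G.V) (t₁ t₂ t₃ : G.E) (huv : u ≠ v) (huw : u ≠ w)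
    (hT : G.IsTriangle t₁ t₂ t₃ u v w)
    (hcontr : (G.contractTriangle u v w t₁ t₂ t₃ huv huw).Loopless)
    (g : (G.contractTriangle u v w t₁ t₂ t₃ huv huw).E → SylvesterS.E)
    (s : SylvesterS.V)
    (hs : ((G.contractTriangle u v w t₁ t₂ t₃ huv huw).star
        (⟨u, huv, huw⟩ : (G.contractTriangle u v w t₁ t₂ t₃ huv huw).V)).image g
      = SylvesterS.star s) :
    ∃ f : G.E → SylvesterS.E,
      (∀ e : (G.contractTriangle u v w t₁ t₂ t₃ huv huw).E, f e.val = g e) ∧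
      (∀ x : (G.contractTriangle u v w t₁ t₂ t₃ huv huw).V,
        x ∈ Multigraph.colVerts (G.contractTriangle u v w t₁ t₂ t₃ huv huw)
              SylvesterS g →
        x ≠ (⟨u, huv, huw⟩ : (G.contractTriangle u v w t₁ t₂ t₃ huv huw).V) →
        x.val ∈ Multigraph.colVerts G SylvesterS f) ∧
      u ∈ Multigraph.colVerts G SylvesterS f ∧
      v ∈ Multigraph.colVerts G SylvesterS f ∧
      w ∈ Multigraph.colVerts G SylvesterS f ∧
      f t₁ ∈ SylvesterS.star s ∧ f t₂ ∈ SylvesterS.star s ∧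
      f t₃ ∈ SylvesterS.star s := by
  obtain ⟨-, hvw, -, h₁, h₂, h₃⟩ := hT
  have hm₁ (x : G.V) : x ∈ G.ends t₁ ↔ x = u ∨ x = v := by rw [h₁, Sym2.mem_iff]
  have hm₂ (x : G.V) : x ∈ G.ends t₂ ↔ x = v ∨ x = w := by rw [h₂, Sym2.mem_iff]
  have hm₃ (x : G.V) : x ∈ G.ends t₃ ↔ x = u ∨ x = w := by rw [h₃, Sym2.mem_iff]
  have hu₂ : u ∉ G.ends t₂ := by simp [hm₂, huv, huw]
  have hv₃ : v ∉ G.ends t₃ := by simp [hm₃, huv.symm, hvw]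
  have hw₁ : w ∉ G.ends t₁ := by simp [hm₁, huw.symm, hvw.symm]
  have h₁₂ : t₁ ≠ t₂ := fun h => hu₂ (h ▸ (hm₁ u).2 (Or.inl rfl))
  have h₁₃ : t₁ ≠ t₃ := fun h => hv₃ (h ▸ (hm₁ v).2 (Or.inr rfl))
  have h₂₃ : t₂ ≠ t₃ := fun h => hv₃ (h ▸ (hm₂ v).2 (Or.inl rfl))
  obtain ⟨a, ha₁, ha₃, ha⟩ := hG.exists_third_edge (x := u) h₁₃ (by simp [hm₁]) (by simp [hm₃])
  obtain ⟨b, hb₁, hb₂, hb⟩ := hG.exists_third_edge (x := v) h₁₂ (by simp [hm₁]) (by simp [hm₂])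
  obtain ⟨c, hc₂, hc₃, hc⟩ := hG.exists_third_edge (x := w) h₂₃ (by simp [hm₂]) (by simp [hm₃])
  have ha₂ : a ≠ t₂ := fun h => hu₂ (h ▸ (ha a).2 (by simp))
  have hb₃ : b ≠ t₃ := fun h => hv₃ (h ▸ (hb b).2 (by simp))
  have hc₁ : c ≠ t₁ := fun h => hw₁ (h ▸ (hc c).2 (by simp))
  have hstar (k : SylvesterS.E) : k ∈ SylvesterS.star s ↔
      k = g ⟨a, ha₁, ha₂, ha₃⟩ ∨ k = g ⟨b, hb₁, hb₂, hb₃⟩ ∨ k = g ⟨c, hc₁, hc₂, hc₃⟩ := by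
    have hroot (e : (G.contractTriangle u v w t₁ t₂ t₃ huv huw).E) :=
      (Multigraph.mem_star _ _ e).trans
        (G.contractTriangle_root_mem_ends u v w t₁ t₂ t₃ huv huw e)
    rw [← hs, Finset.mem_image]
    constructor
    · rintro ⟨⟨e, he₁, he₂, he₃⟩, he, rfl⟩
      have he' := (hroot _).1 he
      simp only [ha, hb, hc, he₁, he₂, he₃, false_or] at he'
      rcases he' with rfl | rfl | rfl <;> simp
    · rintro (rfl | rfl | rfl)
      · exact ⟨_, (hroot _).2 (Or.inl ((ha a).2 (by simp))), rfl⟩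
      · exact ⟨_, (hroot _).2 (Or.inr (Or.inl ((hb b).2 (by simp)))), rfl⟩
      · exact ⟨_, (hroot _).2 (Or.inr (Or.inr ((hc c).2 (by simp)))), rfl⟩
  let f : G.E → SylvesterS.E := fun e =>
    if h : e ≠ t₁ ∧ e ≠ t₂ ∧ e ≠ t₃ then g ⟨e, h⟩
    else if e = t₁ then g ⟨c, hc₁, hc₂, hc₃⟩
    else if e = t₂ then g ⟨a, ha₁, ha₂, ha₃⟩
    else g ⟨b, hb₁, hb₂, hb₃⟩
  have hf (e : (G.contractTriangle u v w t₁ t₂ t₃ huv huw).E) : f e.val = g e := dif_pos e.2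
  have hf₁ : f t₁ = g ⟨c, hc₁, hc₂, hc₃⟩ := by simp [f]
  have hf₂ : f t₂ = g ⟨a, ha₁, ha₂, ha₃⟩ := by simp [f, h₁₂.symm]
  have hf₃ : f t₃ = g ⟨b, hb₁, hb₂, hb₃⟩ := by simp [f, h₁₃.symm, h₂₃.symm]
  have hfa : f a = g ⟨a, ha₁, ha₂, ha₃⟩ := hf ⟨a, ha₁, ha₂, ha₃⟩
  have hfb : f b = g ⟨b, hb₁, hb₂, hb₃⟩ := hf ⟨b, hb₁, hb₂, hb₃⟩
  have hfc : f c = g ⟨c, hc₁, hc₂, hc₃⟩ := hf ⟨c, hc₁, hc₂, hc₃⟩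
  refine ⟨f, hf, ?_, ⟨s, ?_⟩, ⟨s, ?_⟩, ⟨s, ?_⟩, ?_, ?_, ?_⟩
  · rintro x ⟨y, hy⟩ hx
    have hxu : x.val ≠ u := fun h => hx (Subtype.ext h)
    have hxv : x.val ≠ v := x.2.1
    have hxw : x.val ≠ w := x.2.2
    refine ⟨y, ?_⟩
    rw [← hy]
    ext k
    simp only [Finset.mem_image, Multigraph.mem_star]
    constructor
    · rintro ⟨e, he, rfl⟩
      have he' : e ≠ t₁ ∧ e ≠ t₂ ∧ e ≠ t₃ := by
        refine ⟨?_, ?_, ?_⟩ <;> rintro rfl <;> simp_all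
      exact ⟨⟨e, he'⟩, (G.contractTriangle_mem_ends u v w t₁ t₂ t₃ huv huw x hxu _).2 he,
        (hf ⟨e, he'⟩).symm⟩
    · rintro ⟨e, he, rfl⟩
      exact ⟨e.val, (G.contractTriangle_mem_ends u v w t₁ t₂ t₃ huv huw x hxu e).1 he, hf e⟩
  · ext k
    simp only [Finset.mem_image, Multigraph.mem_star G, hstar, ha, or_and_right, exists_or,
      exists_eq_left, hf₁, hf₃, hfa, eq_comm (a := k)]
    tauto
  · ext k
    simp only [Finset.mem_image, Multigraph.mem_star G, hstar, hb, or_and_right, exists_or,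
      exists_eq_left, hf₁, hf₂, hfb, eq_comm (a := k)]
    tauto
  · ext k
    simp only [Finset.mem_image, Multigraph.mem_star G, hstar, hc, or_and_right, exists_or,
      exists_eq_left, hf₂, hf₃, hfc, eq_comm (a := k)]
  · simp [hstar, hf₁]
  · simp [hstar, hf₂]
  · simp [hstar, hf₃]
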